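/- For every finite dimensional real Banach space E, γ(E) = sup_{n≥1} K_G^+(E, ℓ_2^n). -/

import Mathlib

/-!
Both sides of the identity are suprema of bilinear expressions indexed by finite families in `E`.
Call a family `e : Fin n → E` contractive if `‖(φ (e i))_i‖₂ ≤ ‖φ‖` for every functional `φ`, that
is, if `φ ↦ (φ (e i))_i` is a contraction `E* → ℓ₂ⁿ`; equivalently, its transpose `ℓ₂ⁿ → E` is one.
The non-negative tensors of norm at most one are exactly the `∑ e i ⊗ e i` with `e` contractive,
and `tr (BA) = ∑ A (e i) (e i)` for `B = ∑ e i ⊗ e i`.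

Trace duality (`sum_le_projNorm`, and `exists_projNorm_eq`, which is Hahn-Banach together with
reflexivity of `E`) says that the projective norm of `w : E → ℓ₂ⁿ` is the maximum of
`∑ (w (x i))_i` over contractive `x`. A contraction `u : E* → ℓ₂ⁿ` is itself given by a contractive
family `f`, so the projective norm of `u ∘ Aᵀ` is the maximum of `∑ A (f i) (x i)` over
contractive `x`. Taking `x = f` gives `γ(E) ≤ sup K_G⁺`. For the converse, `A ≥ 0` gives
`A f x ≤ (A f f + A x x) / 2`, and each of the two diagonal sums is at most `γ(E)`.
-/


open scoped BigOperators

/-- The projective tensor norm of the element of `X* ⊗ F` corresponding (via the canonical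
identification, `X` finite dimensional) to the continuous linear map `u : X → F`. -/
noncomputable def projNorm {X F : Type*} [NormedAddCommGroup X] [NormedSpace ℝ X]
    [NormedAddCommGroup F] [NormedSpace ℝ F] (u : X →L[ℝ] F) : ℝ :=
  sInf { r : ℝ | ∃ (k : ℕ) (η : Fin k → (X →L[ℝ] ℝ)) (f : Fin k → F),
    (∀ x, u x = ∑ i, η i x • f i) ∧ r = ∑ i, ‖η i‖ * ‖f i‖ }

/-- The Grothendieck constant `K_G(E,F)`.  An element of `E ⊗ F` is encoded as a map
`u : E* → F`, an element of `E* ⊗ F` as a map `E → F`, and `A ⊗ id_F` sends `u` to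
`u ∘ Aᵀ`, where `Aᵀ = A.flip : E → E*`. -/
noncomputable def KG (E F : Type*) [NormedAddCommGroup E] [NormedSpace ℝ E]
    [NormedAddCommGroup F] [NormedSpace ℝ F] : ℝ :=
  sSup { r : ℝ | ∃ (A : E →L[ℝ] (E →L[ℝ] ℝ)) (u : (E →L[ℝ] ℝ) →L[ℝ] F),
    ‖A‖ ≤ 1 ∧ ‖u‖ ≤ 1 ∧ r = projNorm (u.comp A.flip) }

/-- `ρ(E,F)`: the norm of the identity from `E ⊗̌ F` to `E ⊗̂ F`. -/
noncomputable def rho (E F : Type*) [NormedAddCommGroup E] [NormedSpace ℝ E]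
    [NormedAddCommGroup F] [NormedSpace ℝ F] : ℝ :=
  sSup { r : ℝ | ∃ u : (E →L[ℝ] ℝ) →L[ℝ] F, ‖u‖ ≤ 1 ∧ r = projNorm u }

/-- `A : E → E*` is non-negative: the corresponding tensor in `E* ⊗ E*` is a (finite) sum of
symmetric tensors `η ⊗ η`, i.e. lies in the convex hull of such tensors. -/
def IsNonnegMap {E : Type*} [NormedAddCommGroup E] [NormedSpace ℝ E]
    (A : E →L[ℝ] (E →L[ℝ] ℝ)) : Prop :=
  ∃ (k : ℕ) (η : Fin k → (E →L[ℝ] ℝ)), ∀ x, A x = ∑ i, η i x • η i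

/-- A tensor `z ∈ E ⊗ E` (encoded as a map `E* → E`) is non-negative if it is a finite sum of
symmetric tensors `e ⊗ e`. -/
def IsNonnegTensor {E : Type*} [NormedAddCommGroup E] [NormedSpace ℝ E]
    (z : (E →L[ℝ] ℝ) →L[ℝ] E) : Prop :=
  ∃ (k : ℕ) (e : Fin k → E), ∀ φ, z φ = ∑ i, φ (e i) • e i

/-- The positive Grothendieck constant `K_G⁺(E,F)`. -/
noncomputable def KGpos (E F : Type*) [NormedAddCommGroup E] [NormedSpace ℝ E]
    [NormedAddCommGroup F] [NormedSpace ℝ F] : ℝ :=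
  sSup { r : ℝ | ∃ (A : E →L[ℝ] (E →L[ℝ] ℝ)) (u : (E →L[ℝ] ℝ) →L[ℝ] F),
    IsNonnegMap A ∧ ‖A‖ ≤ 1 ∧ ‖u‖ ≤ 1 ∧ r = projNorm (u.comp A.flip) }

/-- The factorization constant `f(X,E)` of `X` through `E`. -/
noncomputable def factConst (X E : Type*) [NormedAddCommGroup X] [NormedSpace ℝ X]
    [NormedAddCommGroup E] [NormedSpace ℝ E] : ℝ :=
  sInf { r : ℝ | ∃ (u : X →L[ℝ] E) (v : E →L[ℝ] X),
    v.comp u = ContinuousLinearMap.id ℝ X ∧ r = ‖u‖ * ‖v‖ }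

/-- `γ(E) = sup { tr(BA) : A ≥ 0, B ≥ 0, ‖A‖ ≤ 1, ‖B‖ ≤ 1 }`. -/
noncomputable def gammaConst (E : Type*) [NormedAddCommGroup E] [NormedSpace ℝ E] : ℝ :=
  sSup { r : ℝ | ∃ (A : E →L[ℝ] (E →L[ℝ] ℝ)) (B : (E →L[ℝ] ℝ) →L[ℝ] E),
    IsNonnegMap A ∧ IsNonnegTensor B ∧ ‖A‖ ≤ 1 ∧ ‖B‖ ≤ 1 ∧
    r = LinearMap.trace ℝ E ((B.comp A : E →L[ℝ] E) : E →ₗ[ℝ] E) }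

/-- `ρ⁺(E)`: as `ρ(E,E)` but the supremum is restricted to non-negative tensors. -/
noncomputable def rhoPlus (E : Type*) [NormedAddCommGroup E] [NormedSpace ℝ E] : ℝ :=
  sSup { r : ℝ | ∃ z : (E →L[ℝ] ℝ) →L[ℝ] E,
    IsNonnegTensor z ∧ ‖z‖ ≤ 1 ∧ r = projNorm z }

/-- `X` has (Rademacher) cotype `q`. -/
def HasCotype (X : Type*) [NormedAddCommGroup X] [NormedSpace ℝ X] (q : ℝ) : Prop :=
  ∃ C > 0, ∀ (n : ℕ) (x : Fin n → X),
    (∑ i, ‖x i‖ ^ q) ^ (1/q) ≤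
      C * (((2 : ℝ) ^ n)⁻¹ *
        ∑ ε : Fin n → Bool, ‖∑ i, (if ε i then (1:ℝ) else -1) • x i‖ ^ 2) ^ (1/2 : ℝ)

/-! ### The projective norm and trace duality -/

section ProjNorm

variable {E : Type*} [NormedAddCommGroup E] [NormedSpace ℝ E]

theorem projNorm_le {X F : Type*} [NormedAddCommGroup X] [NormedSpace ℝ X]
    [NormedAddCommGroup F] [NormedSpace ℝ F] {u : X →L[ℝ] F} {k : ℕ}
    (η : Fin k → (X →L[ℝ] ℝ)) (f : Fin k → F) (h : ∀ x, u x = ∑ i, η i x • f i) :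
    projNorm u ≤ ∑ i, ‖η i‖ * ‖f i‖ := by
  refine csInf_le ⟨0, ?_⟩ ⟨k, η, f, h, rfl⟩
  rintro r ⟨k, η, f, -, rfl⟩
  positivity

/-- A lower bound for all representations is a lower bound for the projective norm; the target is
`ℓ₂ⁿ` so that a representation exists and the infimum is not over the empty set. -/
theorem le_projNorm {n : ℕ} {u : E →L[ℝ] EuclideanSpace ℝ (Fin n)} {c : ℝ}
    (h : ∀ (k : ℕ) (η : Fin k → (E →L[ℝ] ℝ)) (f : Fin k → EuclideanSpace ℝ (Fin n)),
      (∀ x, u x = ∑ i, η i x • f i) → c ≤ ∑ i, ‖η i‖ * ‖f i‖) :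
    c ≤ projNorm u := by
  refine le_csInf ⟨_, n, fun i => (EuclideanSpace.proj i).comp u,
    fun i => EuclideanSpace.single i 1, fun x => ?_, rfl⟩ ?_
  · ext j
    simp [Pi.single_apply]
  · rintro r ⟨k, η, f, hf, rfl⟩
    exact h k η f hf

theorem projNorm_nonneg {n : ℕ} (u : E →L[ℝ] EuclideanSpace ℝ (Fin n)) : 0 ≤ projNorm u :=
  le_projNorm fun _ _ _ _ => by positivity

theorem projNorm_smul_le {n : ℕ} {c : ℝ} (hc : 0 < c) (u : E →L[ℝ] EuclideanSpace ℝ (Fin n)) :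
    projNorm (c • u) ≤ c * projNorm u := by
  rw [← div_le_iff₀' hc]
  refine le_projNorm fun k η f h => ?_
  rw [div_le_iff₀' hc]
  refine (projNorm_le (fun i => c • η i) f fun x => ?_).trans_eq ?_
  · simp [h, Finset.smul_sum, mul_smul]
  · simp [norm_smul, abs_of_pos hc, Finset.mul_sum, mul_assoc]

theorem projNorm_smul {n : ℕ} {c : ℝ} (hc : 0 < c) (u : E →L[ℝ] EuclideanSpace ℝ (Fin n)) :
    projNorm (c • u) = c * projNorm u := by
  refine le_antisymm (projNorm_smul_le hc u) ?_
  have h := projNorm_smul_le (inv_pos.2 hc) (c • u)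
  rwa [inv_smul_smul₀ hc.ne', ← div_eq_inv_mul, le_div_iff₀' hc] at h

theorem projNorm_add {n : ℕ} (u v : E →L[ℝ] EuclideanSpace ℝ (Fin n)) :
    projNorm (u + v) ≤ projNorm u + projNorm v := by
  rw [← sub_le_iff_le_add]
  refine le_projNorm fun k η f h => ?_
  rw [sub_le_comm]
  refine le_projNorm fun l θ g h' => ?_
  rw [sub_le_iff_le_add']
  refine (projNorm_le (Fin.append η θ) (Fin.append f g) fun x => ?_).trans_eq ?_
  · simp [h, h', Fin.sum_univ_add]
  · simp [Fin.sum_univ_add]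

theorem projNorm_smulRight_le {n : ℕ} (η : E →L[ℝ] ℝ) (y : EuclideanSpace ℝ (Fin n)) :
    projNorm (η.smulRight y) ≤ ‖η‖ * ‖y‖ := by
  simpa using projNorm_le (u := η.smulRight y) (fun _ : Fin 1 => η) (fun _ => y) (by simp)

/-- Reflexivity of finite dimensional spaces. -/
theorem exists_eval_eq [FiniteDimensional ℝ E] (g : (E →L[ℝ] ℝ) →ₗ[ℝ] ℝ) :
    ∃ x : E, ∀ φ, φ x = g φ := by
  obtain ⟨x, hx⟩ := (Module.evalEquiv ℝ E).surjective
    (g ∘ₗ (LinearMap.toContinuousLinearMap (𝕜 := ℝ) (E := E) (F' := ℝ)).toLinearMap)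
  refine ⟨x, fun φ => ?_⟩
  have h := LinearMap.congr_fun hx (φ : E →ₗ[ℝ] ℝ)
  exact h

/-- A family in `E` is contractive if `φ ↦ (φ (e i))_i` is a contraction from `E*` to `ℓ₂ⁿ`. -/
def IsContractiveFamily {n : ℕ} (e : Fin n → E) : Prop :=
  ∀ φ : E →L[ℝ] ℝ, ‖(WithLp.toLp 2 (fun i => φ (e i)) : EuclideanSpace ℝ (Fin n))‖ ≤ ‖φ‖

/-- The trace pairing of a contraction `ℓ₂ⁿ → E` with `w : E → ℓ₂ⁿ` is at most the projective norm
of `w`. -/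
theorem sum_le_projNorm {n : ℕ} {x : Fin n → E} (hx : IsContractiveFamily x)
    (w : E →L[ℝ] EuclideanSpace ℝ (Fin n)) : ∑ i, w (x i) i ≤ projNorm w := by
  refine le_projNorm fun k η f h => ?_
  have h1 : ∑ i, w (x i) i = ∑ j, ∑ i, η j (x i) * f j i := by
    rw [Finset.sum_comm]
    simp [h]
  rw [h1]
  refine Finset.sum_le_sum fun j _ => ?_
  have h2 := real_inner_le_norm (f j)
    (WithLp.toLp 2 (fun i => η j (x i)) : EuclideanSpace ℝ (Fin n))
  rw [PiLp.inner_apply] at h2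
  calc ∑ i, η j (x i) * f j i ≤ _ := h2
    _ ≤ ‖f j‖ * ‖η j‖ := by gcongr; exact hx _
    _ = _ := mul_comm _ _

/-- The trace pairing attains the projective norm. -/
theorem exists_projNorm_eq [FiniteDimensional ℝ E] {n : ℕ}
    (w : E →L[ℝ] EuclideanSpace ℝ (Fin n)) :
    ∃ x : Fin n → E, IsContractiveFamily x ∧ projNorm w = ∑ i, w (x i) i := by
  rcases eq_or_ne w 0 with rfl | hw
  · refine ⟨fun _ => 0, fun φ => ?_, ?_⟩
    · have : (WithLp.toLp 2 (fun _ => (0 : ℝ)) : EuclideanSpace ℝ (Fin n)) = 0 := rfl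
      simp [this]
    · refine le_antisymm ?_ (by simpa using projNorm_nonneg _)
      simpa using projNorm_le (u := (0 : E →L[ℝ] EuclideanSpace ℝ (Fin n)))
        (k := 0) (fun _ => 0) (fun _ => 0) (by simp)
  -- Hahn-Banach: a functional `g` dominated by the projective norm and norming `w`.
  obtain ⟨g, hg, hgN⟩ := exists_extension_of_le_sublinear
    (LinearPMap.mkSpanSingleton w (projNorm w) hw) projNorm
    (fun c hc u => projNorm_smul hc u) projNorm_add (by
      rintro ⟨z, hz⟩
      obtain ⟨t, rfl⟩ := Submodule.mem_span_singleton.1 hz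
      change LinearPMap.mkSpanSingleton' w (projNorm w) _ _ ≤ projNorm (t • w)
      rw [LinearPMap.mkSpanSingleton'_apply]
      rcases lt_or_ge 0 t with ht | ht
      · simp [projNorm_smul ht]
      · exact (mul_nonpos_of_nonpos_of_nonneg ht (projNorm_nonneg w)).trans (projNorm_nonneg _))
  have hgw : g w = projNorm w := by
    have h := hg ⟨w, Submodule.mem_span_singleton_self w⟩
    rw [h]
    exact LinearPMap.mkSpanSingleton_apply ℝ ℝ hw (projNorm w)
  let b : Fin n → EuclideanSpace ℝ (Fin n) := fun i => EuclideanSpace.single i 1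
  let G : Fin n → (E →L[ℝ] ℝ) →ₗ[ℝ] ℝ := fun i =>
    { toFun := fun η => g (η.smulRight (b i))
      map_add' := fun η θ => by
        rw [← map_add]; congr 1; ext; simp [add_mul]
      map_smul' := fun c η => by
        rw [← map_smul]; congr 1; ext; simp [mul_assoc] }
  choose x hx using fun i => exists_eval_eq (G i)
  have hx' : ∀ i (φ : E →L[ℝ] ℝ), φ (x i) = g (φ.smulRight (b i)) := fun i φ => hx i φ
  refine ⟨x, fun φ => ?_, ?_⟩
  ·
    -- Pairing `φ ⊗ y` with `g`, where `y = (φ (x i))_i`, gives `‖y‖² ≤ ‖φ‖ ‖y‖`.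
    set y : EuclideanSpace ℝ (Fin n) := WithLp.toLp 2 (fun i => φ (x i)) with hy
    have h1 : φ.smulRight y = ∑ i, y i • φ.smulRight (b i) := by
      ext z j
      simp [b, Pi.single_apply, mul_comm]
    have h2 : g (φ.smulRight y) = ‖y‖ ^ 2 := by
      rw [h1, map_sum, EuclideanSpace.real_norm_sq_eq]
      refine Finset.sum_congr rfl fun i _ => ?_
      rw [map_smul, ← hx', smul_eq_mul, sq]
    have h3 := (hgN (φ.smulRight y)).trans (projNorm_smulRight_le φ y)
    rw [h2] at h3
    by_contra! hlt
    nlinarith [norm_nonneg φ]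
  · have h1 : w = ∑ i, ((EuclideanSpace.proj i).comp w : E →L[ℝ] ℝ).smulRight (b i) := by
      ext z j
      simp [b, Pi.single_apply]
    rw [← hgw]
    conv_lhs => rw [h1, map_sum]
    refine Finset.sum_congr rfl fun i _ => ?_
    rw [← hx']
    simp

end ProjNorm

/-! ### Non-negative maps and tensors -/

section Nonneg

variable {E : Type*} [NormedAddCommGroup E] [NormedSpace ℝ E]

/-- The non-negative tensor `∑ e i ⊗ e i`. -/
noncomputable def sumTensor {n : ℕ} (e : Fin n → E) : (E →L[ℝ] ℝ) →L[ℝ] E :=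
  ∑ i, (ContinuousLinearMap.apply ℝ ℝ (e i)).smulRight (e i)

theorem sumTensor_apply {n : ℕ} (e : Fin n → E) (φ : E →L[ℝ] ℝ) :
    sumTensor e φ = ∑ i, φ (e i) • e i := by
  simp [sumTensor]

theorem norm_sumTensor_le {n : ℕ} {e : Fin n → E} (he : IsContractiveFamily e) :
    ‖sumTensor e‖ ≤ 1 := by
  refine ContinuousLinearMap.opNorm_le_bound _ zero_le_one fun φ => ?_
  refine NormedSpace.norm_le_dual_bound ℝ _ (by positivity) fun ψ => ?_
  have h1 : ψ (sumTensor e φ) = inner ℝ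
      (WithLp.toLp 2 (fun i => ψ (e i)) : EuclideanSpace ℝ (Fin n))
      (WithLp.toLp 2 (fun i => φ (e i)) : EuclideanSpace ℝ (Fin n)) := by
    rw [PiLp.inner_apply, sumTensor_apply]
    simp
  rw [h1]
  refine (norm_inner_le_norm _ _).trans ?_
  rw [one_mul, mul_comm]
  exact mul_le_mul (he φ) (he ψ) (norm_nonneg _) (norm_nonneg _)

theorem isContractiveFamily_of_norm_le {n : ℕ} {e : Fin n → E} {B : (E →L[ℝ] ℝ) →L[ℝ] E}
    (hB : ∀ φ, B φ = ∑ i, φ (e i) • e i) (hB1 : ‖B‖ ≤ 1) : IsContractiveFamily e := by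
  intro φ
  have h1 : φ (B φ) =
      ‖(WithLp.toLp 2 (fun i => φ (e i)) : EuclideanSpace ℝ (Fin n))‖ ^ 2 := by
    rw [hB, EuclideanSpace.real_norm_sq_eq]
    simp [sq]
  have h2 : φ (B φ) ≤ ‖φ‖ * (1 * ‖φ‖) :=
    (le_abs_self _).trans ((φ.le_opNorm _).trans
      (mul_le_mul_of_nonneg_left (B.le_of_opNorm_le hB1 φ) (norm_nonneg _)))
  refine abs_le_of_sq_le_sq' ?_ (norm_nonneg _) |>.2
  rw [← h1]
  linarith

theorem trace_comp_eq [FiniteDimensional ℝ E] {n : ℕ} {e : Fin n → E}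
    {B : (E →L[ℝ] ℝ) →L[ℝ] E} (hB : ∀ φ, B φ = ∑ i, φ (e i) • e i)
    (A : E →L[ℝ] (E →L[ℝ] ℝ)) :
    LinearMap.trace ℝ E ((B.comp A : E →L[ℝ] E) : E →ₗ[ℝ] E) = ∑ i, A (e i) (e i) := by
  have h1 : ((B.comp A : E →L[ℝ] E) : E →ₗ[ℝ] E) =
      ∑ i, dualTensorHom ℝ E E ((A.flip (e i) : E →ₗ[ℝ] ℝ) ⊗ₜ[ℝ] e i) := by
    ext x
    simp [hB]
  rw [h1, map_sum]
  refine Finset.sum_congr rfl fun i _ => ?_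
  rw [LinearMap.trace_eq_contract_apply]
  simp

theorem IsNonnegMap.two_mul_le {A : E →L[ℝ] (E →L[ℝ] ℝ)} (hA : IsNonnegMap A) (x y : E) :
    2 * A x y ≤ A x x + A y y := by
  obtain ⟨k, η, h⟩ := hA
  simp only [h, sum_apply, smul_apply, smul_eq_mul,
    Finset.mul_sum, ← Finset.sum_add_distrib]
  refine Finset.sum_le_sum fun i _ => ?_
  nlinarith [sq_nonneg (η i x - η i y)]

/-- The set in the definition of `gammaConst` is bounded, the trace being continuous on the finite
dimensional space of operators on `E`. -/
theorem bddAbove_gamma (E : Type*) [NormedAddCommGroup E] [NormedSpace ℝ E]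
    [FiniteDimensional ℝ E] :
    BddAbove { r : ℝ | ∃ (A : E →L[ℝ] (E →L[ℝ] ℝ)) (B : (E →L[ℝ] ℝ) →L[ℝ] E),
      IsNonnegMap A ∧ IsNonnegTensor B ∧ ‖A‖ ≤ 1 ∧ ‖B‖ ≤ 1 ∧
      r = LinearMap.trace ℝ E ((B.comp A : E →L[ℝ] E) : E →ₗ[ℝ] E) } := by
  let T : (E →L[ℝ] E) →L[ℝ] ℝ := LinearMap.toContinuousLinearMap
    (LinearMap.trace ℝ E ∘ₗ ContinuousLinearMap.coeLM ℝ)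
  refine ⟨‖T‖, ?_⟩
  rintro r ⟨A, B, -, -, hA, hB, rfl⟩
  change T (B.comp A) ≤ ‖T‖
  have h1 : ‖B.comp A‖ ≤ 1 := (B.opNorm_comp_le A).trans (mul_le_one₀ hB (norm_nonneg _) hA)
  calc T (B.comp A) ≤ ‖T (B.comp A)‖ := le_abs_self _
    _ ≤ ‖T‖ * ‖B.comp A‖ := T.le_opNorm _
    _ ≤ ‖T‖ := mul_le_of_le_one_right (norm_nonneg T) h1

theorem diag_le_gammaConst [FiniteDimensional ℝ E] {A : E →L[ℝ] (E →L[ℝ] ℝ)}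
    (hA : IsNonnegMap A) (hA1 : ‖A‖ ≤ 1) {n : ℕ} {e : Fin n → E} (he : IsContractiveFamily e) :
    ∑ i, A (e i) (e i) ≤ gammaConst E :=
  le_csSup (bddAbove_gamma E) ⟨A, sumTensor e, hA, ⟨n, e, sumTensor_apply e⟩, hA1,
    norm_sumTensor_le he, (trace_comp_eq (sumTensor_apply e) A).symm⟩

/-- The bound `K_G⁺(E, ℓ₂ⁿ) ≤ γ(E)`: trace duality turns the projective norm into
`∑ A (f i) (x i)` with `f` and `x` contractive, and positivity of `A` reduces this to the two
diagonal sums. -/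
theorem projNorm_le_gammaConst [FiniteDimensional ℝ E] {A : E →L[ℝ] (E →L[ℝ] ℝ)}
    (hA : IsNonnegMap A) (hA1 : ‖A‖ ≤ 1) {n : ℕ}
    {u : (E →L[ℝ] ℝ) →L[ℝ] EuclideanSpace ℝ (Fin n)} (hu : ‖u‖ ≤ 1) :
    projNorm (u.comp A.flip) ≤ gammaConst E := by
  obtain ⟨x, hx, h⟩ := exists_projNorm_eq (u.comp A.flip)
  -- By reflexivity the coordinates of `u` are evaluations at a family `f`.
  choose f hf using fun i : Fin n => exists_eval_eq
    (((EuclideanSpace.proj i).comp u : (E →L[ℝ] ℝ) →L[ℝ] ℝ) : (E →L[ℝ] ℝ) →ₗ[ℝ] ℝ)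
  have hf' : ∀ i (φ : E →L[ℝ] ℝ), φ (f i) = u φ i := fun i φ => hf i φ
  have hfc : IsContractiveFamily f := by
    intro φ
    have : (WithLp.toLp 2 (fun i => φ (f i)) : EuclideanSpace ℝ (Fin n)) = u φ := by
      ext i
      exact hf' i φ
    rw [this]
    simpa using u.le_of_opNorm_le hu φ
  have h2 : projNorm (u.comp A.flip) = ∑ i, A (f i) (x i) := by
    rw [h]
    refine Finset.sum_congr rfl fun i _ => ?_
    change u (A.flip (x i)) i = _
    rw [← hf']
    rfl
  have h3 : 2 * ∑ i, A (f i) (x i) ≤ ∑ i, A (f i) (f i) + ∑ i, A (x i) (x i) := by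
    rw [Finset.mul_sum, ← Finset.sum_add_distrib]
    exact Finset.sum_le_sum fun i _ => hA.two_mul_le _ _
  have h4 := diag_le_gammaConst hA hA1 hfc
  have h5 := diag_le_gammaConst hA hA1 hx
  linarith

theorem isNonnegMap_zero : IsNonnegMap (0 : E →L[ℝ] (E →L[ℝ] ℝ)) :=
  ⟨0, fun _ => 0, by simp⟩

theorem KGpos_le_gammaConst [FiniteDimensional ℝ E] (n : ℕ) :
    KGpos E (EuclideanSpace ℝ (Fin n)) ≤ gammaConst E := by
  refine csSup_le ⟨_, 0, 0, isNonnegMap_zero, ContinuousLinearMap.opNorm_zero.trans_le zero_le_one,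
    ContinuousLinearMap.opNorm_zero.trans_le zero_le_one, rfl⟩ ?_
  rintro r ⟨A, u, hA, hA1, hu, rfl⟩
  exact projNorm_le_gammaConst hA hA1 hu

theorem projNorm_le_KGpos [FiniteDimensional ℝ E] {A : E →L[ℝ] (E →L[ℝ] ℝ)}
    (hA : IsNonnegMap A) (hA1 : ‖A‖ ≤ 1) {n : ℕ}
    {u : (E →L[ℝ] ℝ) →L[ℝ] EuclideanSpace ℝ (Fin n)} (hu : ‖u‖ ≤ 1) :
    projNorm (u.comp A.flip) ≤ KGpos E (EuclideanSpace ℝ (Fin n)) := by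
  refine le_csSup ⟨gammaConst E, ?_⟩ ⟨A, u, hA, hA1, hu, rfl⟩
  rintro r ⟨A, u, hA, hA1, hu, rfl⟩
  exact projNorm_le_gammaConst hA hA1 hu

/-- The test map is `u φ = (φ (e i))_i`, whose pairing with `e` itself is the diagonal sum. -/
theorem diag_le_KGpos [FiniteDimensional ℝ E] {A : E →L[ℝ] (E →L[ℝ] ℝ)}
    (hA : IsNonnegMap A) (hA1 : ‖A‖ ≤ 1) {n : ℕ} {e : Fin n → E} (he : IsContractiveFamily e) :
    ∑ i, A (e i) (e i) ≤ KGpos E (EuclideanSpace ℝ (Fin n)) := by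
  let u : (E →L[ℝ] ℝ) →L[ℝ] EuclideanSpace ℝ (Fin n) := LinearMap.mkContinuous
    { toFun := fun φ => WithLp.toLp 2 (fun i => φ (e i))
      map_add' := fun φ ψ => by ext; simp
      map_smul' := fun c φ => by ext; simp } 1 (fun φ => by simpa using he φ)
  have hu : ‖u‖ ≤ 1 := LinearMap.mkContinuous_norm_le _ zero_le_one _
  exact (sum_le_projNorm he (u.comp A.flip)).trans (projNorm_le_KGpos hA hA1 hu)

end Nonneg

/-- For every finite dimensional real Banach space `E`,
`γ(E) = sup_{n ≥ 1} K_G⁺(E, ℓ₂ⁿ)`. -/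
theorem statement16 (E : Type*)
    [NormedAddCommGroup E] [NormedSpace ℝ E] [FiniteDimensional ℝ E] :
    gammaConst E =
      sSup { r : ℝ | ∃ n : ℕ, 1 ≤ n ∧ r = KGpos E (EuclideanSpace ℝ (Fin n)) } := by
  have hbdd : BddAbove
      { r : ℝ | ∃ n : ℕ, 1 ≤ n ∧ r = KGpos E (EuclideanSpace ℝ (Fin n)) } := by
    refine ⟨gammaConst E, ?_⟩
    rintro r ⟨n, -, rfl⟩
    exact KGpos_le_gammaConst n
  apply le_antisymm
  · refine csSup_le ⟨_, 0, 0, isNonnegMap_zero, ⟨0, fun _ => 0, by simp⟩,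
      ContinuousLinearMap.opNorm_zero.trans_le zero_le_one,
      ContinuousLinearMap.opNorm_zero.trans_le zero_le_one, rfl⟩ ?_
    rintro r ⟨A, B, hA, ⟨k, e, hB⟩, hA1, hB1, rfl⟩
    rw [trace_comp_eq hB]
    have he := isContractiveFamily_of_norm_le hB hB1
    rcases Nat.eq_zero_or_pos k with rfl | hk
    · -- The empty family has trace zero, and dimension `0` is not allowed in the supremum.
      have h1 := diag_le_KGpos hA hA1 (n := 1) (e := fun _ => (0 : E)) (fun φ => by
        simp [EuclideanSpace.norm_eq])
      refine le_trans ?_ (le_csSup hbdd ⟨1, le_rfl, rfl⟩)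
      simpa using h1
    · exact (diag_le_KGpos hA hA1 he).trans (le_csSup hbdd ⟨k, hk, rfl⟩)
  · refine csSup_le ⟨_, 1, le_rfl, rfl⟩ ?_
    rintro r ⟨n, -, rfl⟩
    exact KGpos_le_gammaConst n
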